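/- arXiv:2502.05875 — 4 statements merged into one kernel-verified Lean document; each statement's English description precedes it below -/
import Mathlib

section
/- If L is a complete lattice and y ∈ L is not widely generated, then y has no canonical join representation. Equivalently, every element of a complete lattice that has a canonical join representation is widely generated. -/
/-!
Let `U` be a canonical join representation of `y` and let `z < y`. Some `u ∈ U` satisfies `u ≰ z`;
put `w = z ⊔ ⋁ (U \ {u})`. If `w = y`, then `{z} ∪ (U \ {u})` has join `y`, so canonicity puts `u`
below `z` or below another member of `U`; the latter makes `u` redundant. Hence `w < y`.
Any `x ∈ [w, y)` fails `u ≤ x`, since otherwise `x` bounds all of `U`. By canonicity the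
join `m` of `[w, y)` is therefore not `y`, so it is the greatest element of `[w, y)`: a lower cover
of `y` above `z`.
-/

/-- An element `x` of a poset is widely generated if every `y < x` lies below
some lower cover of `x`. -/
def WidelyGenerated {α : Type*} [PartialOrder α] (x : α) : Prop :=
  ∀ y : α, y < x → ∃ x' : α, x' ⋖ x ∧ y ≤ x'

/-- A canonical join representation of `x`: `⋁U = x`, no proper subset of `U`
has join `x` (irredundancy), and `U ≪ V` for every `V` with `⋁V = x`. -/
def IsCanonicalJoinRep {L : Type*} [CompleteLattice L] (U : Set L) (x : L) : Prop :=
  sSup U = x ∧ (∀ U' : Set L, U' ⊂ U → sSup U' ≠ x) ∧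
    ∀ V : Set L, sSup V = x → ∀ u ∈ U, ∃ v ∈ V, u ≤ v

/-- A complete lattice congruence: an equivalence relation such that whenever
`xᵢ ≡ yᵢ` for all `i`, also `⋁ᵢ xᵢ ≡ ⋁ᵢ yᵢ` and `⋀ᵢ xᵢ ≡ ⋀ᵢ yᵢ`
(families are encoded as sets of pairs). -/
def IsCompleteCongruence {L : Type*} [CompleteLattice L] (r : L → L → Prop) : Prop :=
  Equivalence r ∧
    ∀ P : Set (L × L), (∀ p ∈ P, r p.1 p.2) →
      r (sSup (Prod.fst '' P)) (sSup (Prod.snd '' P)) ∧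
      r (sInf (Prod.fst '' P)) (sInf (Prod.snd '' P))

/-- A relation has finitely many equivalence classes. -/
def HasFinitelyManyClasses {α : Type*} (r : α → α → Prop) : Prop :=
  (Set.range fun x : α => {y : α | r x y}).Finite

/-- A cofinite congruence: a complete lattice congruence with finitely many classes. -/
def IsCofiniteCongruence {L : Type*} [CompleteLattice L] (r : L → L → Prop) : Prop :=
  IsCompleteCongruence r ∧ HasFinitelyManyClasses r

/-- A profinite complete lattice: distinct elements are separated by some
cofinite congruence. -/
def IsProfinite (L : Type*) [CompleteLattice L] : Prop :=
  ∀ x y : L, x ≠ y → ∃ r : L → L → Prop, IsCofiniteCongruence r ∧ ¬ r x y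

/-- `x` is compact: whenever `x ≤ ⋁X`, already `x ≤ ⋁X'` for some finite `X' ⊆ X`. -/
def IsCompactElt {L : Type*} [CompleteLattice L] (x : L) : Prop :=
  ∀ X : Set L, x ≤ sSup X → ∃ X' ⊆ X, X'.Finite ∧ x ≤ sSup X'

/-- `x` is finitely generated: `x` is the minimum of its class for some
cofinite congruence, i.e. `x = π↓(x)`. -/
def FinitelyGeneratedElt {L : Type*} [CompleteLattice L] (x : L) : Prop :=
  ∃ r : L → L → Prop, IsCofiniteCongruence r ∧ ∀ y : L, r x y → x ≤ y

/-- `x` is a complete join-irreducible: no set avoiding `x` has join `x`. -/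
def CompleteJoinIrred {L : Type*} [CompleteLattice L] (x : L) : Prop :=
  ¬ ∃ X : Set L, x ∉ X ∧ sSup X = x

/-- Join semidistributivity: for finite nonempty `X`, if `x ∨ y = z` for all
`x ∈ X` then `(⋀X) ∨ y = z`. -/
def JoinSemidistrib (L : Type*) [CompleteLattice L] : Prop :=
  ∀ X : Set L, X.Finite → X.Nonempty → ∀ y z : L,
    (∀ x ∈ X, x ⊔ y = z) → sInf X ⊔ y = z

/-- Complete join semidistributivity: for any nonempty `X`, if `x ∨ y = z` for all
`x ∈ X` then `(⋀X) ∨ y = z`. -/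
def CompletelyJoinSemidistrib (L : Type*) [CompleteLattice L] : Prop :=
  ∀ X : Set L, X.Nonempty → ∀ y z : L,
    (∀ x ∈ X, x ⊔ y = z) → sInf X ⊔ y = z

/-- Join semidistributivity of the quotient lattice `L/≡`, expressed via
representatives: the join of classes `[x] ∨ [y]` is `[x ⊔ y]` and the (finite)
meet of classes `⋀[xᵢ]` is `[⋀ xᵢ]`. -/
def QuotientJoinSemidistrib {L : Type*} [CompleteLattice L] (r : L → L → Prop) : Prop :=
  ∀ X : Set L, X.Finite → X.Nonempty → ∀ y z : L,
    (∀ x ∈ X, r (x ⊔ y) z) → r (sInf X ⊔ y) z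

/-- In a complete lattice, an element which is not widely generated has
no canonical join representation. -/
theorem extended_weak_order_stmt4 {L : Type*} [CompleteLattice L] (y : L)
    (h : ¬ WidelyGenerated y) : ¬ ∃ U : Set L, IsCanonicalJoinRep U y := by
  rintro ⟨U, hsup, hirr, hcan⟩
  refine h fun z hz => ?_
  obtain ⟨u, hu, huz⟩ : ∃ u ∈ U, ¬ u ≤ z := by
    by_contra! hall
    exact hz.not_ge (hsup ▸ sSup_le hall)
  have hproper : U \ {u} ⊂ U := ⟨Set.sdiff_subset, fun hsub => (hsub hu).2 rfl⟩
  have hwle : z ⊔ sSup (U \ {u}) ≤ y :=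
    sup_le hz.le (hsup ▸ sSup_le_sSup Set.sdiff_subset)
  have hwne : z ⊔ sSup (U \ {u}) ≠ y := by
    intro hw
    obtain ⟨v, hv, huv⟩ := hcan (insert z (U \ {u})) (by rw [sSup_insert, hw]) u hu
    rcases hv with rfl | hv
    · exact huz huv
    · refine hirr _ hproper (le_antisymm (le_sup_right.trans hwle) ?_)
      rw [← hsup]
      refine sSup_le fun a ha => ?_
      by_cases hau : a = u
      · exact hau ▸ huv.trans (le_sSup hv)
      · exact le_sSup ⟨ha, hau⟩
  have hnot : ∀ x ∈ Set.Ico (z ⊔ sSup (U \ {u})) y, ¬ u ≤ x := by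
    rintro x ⟨hwx, hxy⟩ hux
    refine hxy.not_ge (hsup ▸ sSup_le fun a ha => ?_)
    by_cases hau : a = u
    · exact hau ▸ hux
    · have hmem : a ∈ U \ {u} := ⟨ha, hau⟩
      exact (le_sSup hmem).trans (le_sup_right.trans hwx)
  have hwm : z ⊔ sSup (U \ {u}) ≤ sSup (Set.Ico (z ⊔ sSup (U \ {u})) y) :=
    le_sSup ⟨le_rfl, lt_of_le_of_ne hwle hwne⟩
  have hmy : sSup (Set.Ico (z ⊔ sSup (U \ {u})) y) < y := by
    refine lt_of_le_of_ne (sSup_le fun x hx => hx.2.le) fun heq => ?_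
    obtain ⟨x, hx, hux⟩ := hcan _ heq u hu
    exact hnot x hx hux
  exact ⟨_, ⟨hmy, fun c hmc hcy => hmc.not_ge (le_sSup ⟨hwm.trans hmc.le, hcy⟩)⟩,
    le_sup_left.trans hwm⟩
end

section
/- Let L be a profinite complete lattice and x ∈ L. The following are equivalent: (i) x is compact; (ii) x is finitely generated; (iii) x is widely generated and x covers only finitely many elements of L; (iv) x is the join of a finite set of complete join-irreducibles of L. -/
namespace IsCompleteCongruence

variable {L : Type*} [CompleteLattice L] {r : L → L → Prop}

lemma sup (h : IsCompleteCongruence r) {a b c d : L} (hab : r a b) (hcd : r c d) :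
    r (a ⊔ c) (b ⊔ d) := by
  have := (h.2 {(a, b), (c, d)} (by rintro p (rfl | rfl) <;> assumption)).1
  simpa [Set.image_pair, sSup_pair] using this

lemma inf (h : IsCompleteCongruence r) {a b c d : L} (hab : r a b) (hcd : r c d) :
    r (a ⊓ c) (b ⊓ d) := by
  have := (h.2 {(a, b), (c, d)} (by rintro p (rfl | rfl) <;> assumption)).2
  simpa [Set.image_pair, sInf_pair] using this

lemma sSup_image (h : IsCompleteCongruence r) (X : Set L) (f : L → L)
    (hf : ∀ a ∈ X, r a (f a)) : r (sSup X) (sSup (f '' X)) := by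
  have := (h.2 ((fun a => (a, f a)) '' X) (by rintro _ ⟨a, ha, rfl⟩; exact hf a ha)).1
  simpa [Set.image_image] using this

/-- Congruence classes are order-convex. -/
lemma convex (h : IsCompleteCongruence r) {a b c : L} (hab : a ≤ b) (hbc : b ≤ c)
    (hac : r c a) : r c b := by
  have := h.sup (h.1.refl b) hac
  rwa [sup_of_le_right hbc, sup_of_le_left hab] at this

/-- Each congruence class contains its infimum, which is therefore its minimum. -/
lemma rel_sInf_class (h : IsCompleteCongruence r) (x : L) : r x (sInf {y | r x y}) := by
  have := (h.2 ((fun y => (x, y)) '' {y | r x y}) (by rintro _ ⟨a, ha, rfl⟩; exact ha)).2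
  have hne : {y | r x y}.Nonempty := ⟨x, h.1.refl x⟩
  simpa [Set.image_image, hne.image_const] using this

/-- To have `x` as the minimum of its class it suffices to be incongruent to everything
strictly below `x`. -/
lemma le_of_rel (h : IsCompleteCongruence r) {x : L} (hx : ∀ y < x, ¬ r x y) {y : L}
    (hy : r x y) : x ≤ y := by
  by_contra hle
  have := h.inf (h.1.refl x) hy
  rw [inf_idem] at this
  exact hx _ (inf_lt_left.2 hle) this

end IsCompleteCongruence

section

variable {L : Type*} [CompleteLattice L]

lemma isCofiniteCongruence_true : IsCofiniteCongruence fun _ _ : L => True := by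
  refine ⟨⟨⟨fun _ => trivial, fun _ => trivial, fun _ _ => trivial⟩,
    fun _ _ => ⟨trivial, trivial⟩⟩, ?_⟩
  exact (Set.finite_singleton (Set.univ : Set L)).subset (by rintro _ ⟨x, rfl⟩; simp)

lemma IsCofiniteCongruence.and {r s : L → L → Prop} (hr : IsCofiniteCongruence r)
    (hs : IsCofiniteCongruence s) : IsCofiniteCongruence fun x y => r x y ∧ s x y := by
  refine ⟨⟨⟨fun x => ⟨hr.1.1.refl x, hs.1.1.refl x⟩,
    fun h => ⟨hr.1.1.symm h.1, hs.1.1.symm h.2⟩,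
    fun h k => ⟨hr.1.1.trans h.1 k.1, hs.1.1.trans h.2 k.2⟩⟩, fun P hP => ?_⟩, ?_⟩
  · have h1 := hr.1.2 P fun p hp => (hP p hp).1
    have h2 := hs.1.2 P fun p hp => (hP p hp).2
    exact ⟨⟨h1.1, h2.1⟩, ⟨h1.2, h2.2⟩⟩
  · refine (Set.Finite.image2 (· ∩ ·) hr.2 hs.2).subset ?_
    rintro _ ⟨x, rfl⟩
    exact ⟨_, ⟨x, rfl⟩, _, ⟨x, rfl⟩, rfl⟩

/-- A common refinement: finitely many cofinite congruences, each of which satisfies `¬ r x i`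
for its index `i`, can be replaced by a single one. -/
lemma exists_cofinite_forall_not_rel (x : L) {I : Set L} (hI : I.Finite)
    (h : ∀ i ∈ I, ∃ r : L → L → Prop, IsCofiniteCongruence r ∧ ¬ r x i) :
    ∃ r : L → L → Prop, IsCofiniteCongruence r ∧ ∀ i ∈ I, ¬ r x i := by
  induction I, hI using Set.Finite.induction_on with
  | empty => exact ⟨_, isCofiniteCongruence_true, by simp⟩
  | insert _ _ ih =>
    obtain ⟨r, hr, hri⟩ := ih fun i hi => h i (Set.mem_insert_of_mem _ hi)
    obtain ⟨s, hs, hsi⟩ := h _ (Set.mem_insert _ _)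
    refine ⟨_, hr.and hs, ?_⟩
    rintro i (rfl | hi) hrel
    · exact hsi hrel.2
    · exact hri i hi hrel.1

/-- If each of finitely many elements is a lower bound of the class of `x` under some cofinite
congruence, then all are lower bounds of the class of `x` under a single one, namely the
intersection of these congruences. -/
lemma exists_cofinite_forall_le (x : L) {I : Set L} (hI : I.Finite)
    (h : ∀ i ∈ I, ∃ r : L → L → Prop, IsCofiniteCongruence r ∧ ∀ y, r x y → i ≤ y) :
    ∃ r : L → L → Prop, IsCofiniteCongruence r ∧ ∀ i ∈ I, ∀ y, r x y → i ≤ y := by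
  induction I, hI using Set.Finite.induction_on with
  | empty => exact ⟨_, isCofiniteCongruence_true, by simp⟩
  | insert _ _ ih =>
    obtain ⟨r, hr, hri⟩ := ih fun i hi => h i (Set.mem_insert_of_mem _ hi)
    obtain ⟨s, hs, hsi⟩ := h _ (Set.mem_insert _ _)
    refine ⟨_, hr.and hs, ?_⟩
    rintro i (rfl | hi) y hrel
    · exact hsi y hrel.2
    · exact hri i hi y hrel.1

lemma FinitelyGeneratedElt.of_isCompactElt (hL : IsProfinite L) {x : L} (hx : IsCompactElt x) :
    FinitelyGeneratedElt x := by
  -- `X` collects the class minima `π↓ x` over all cofinite congruences.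
  let X : Set L := {z | ∃ r : L → L → Prop, IsCofiniteCongruence r ∧ z = sInf {y | r x y}}
  have hX : x ≤ sSup X := by
    have hle : sSup X ≤ x := by
      refine sSup_le ?_
      rintro _ ⟨r, hr, rfl⟩
      exact sInf_le (hr.1.1.refl x)
    by_contra hne
    obtain ⟨r, hr, hxr⟩ := hL x (sSup X) fun h => hne h.le
    exact hxr (hr.1.convex (le_sSup ⟨r, hr, rfl⟩) hle (hr.1.rel_sInf_class x))
  obtain ⟨I, hIX, hI, hxI⟩ := hx X hX
  obtain ⟨r, hr, hri⟩ := exists_cofinite_forall_le x hI (fun i hi => by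
    obtain ⟨r, hr, rfl⟩ := hIX hi
    exact ⟨r, hr, fun y hy => sInf_le hy⟩)
  exact ⟨r, hr, fun y hy => hxI.trans (sSup_le fun i hi => hri i hi y hy)⟩

lemma FinitelyGeneratedElt.isCompactElt {x : L} (hx : FinitelyGeneratedElt x) :
    IsCompactElt x := by
  obtain ⟨r, hr, hmin⟩ := hx
  intro X hX
  have hfin : ((fun a => {y | r a y}) '' X).Finite := hr.2.subset (Set.image_subset_range _ _)
  obtain ⟨X', hX', hfin', heq⟩ :=
    Set.exists_subset_image_finite_and.1 ⟨_, subset_rfl, hfin, rfl⟩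
  have hrep : ∀ a ∈ X, ∃ b ∈ X', r a b := by
    intro a ha
    obtain ⟨b, hb, hab⟩ : (fun a => {y | r a y}) a ∈ (fun a => {y | r a y}) '' X' := by
      rw [← heq]; exact ⟨a, ha, rfl⟩
    refine ⟨b, hb, ?_⟩
    have : b ∈ {y | r a y} := by
      rw [← show {y | r b y} = {y | r a y} from hab]
      exact hr.1.1.refl b
    exact this
  choose! f hfX hf using hrep
  refine ⟨X', hX', hfin', ?_⟩
  have h1 := hr.1.inf (hr.1.1.refl x) (hr.1.sSup_image X f hf)
  rw [inf_of_le_left hX] at h1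
  exact (hmin _ h1).trans (inf_le_right.trans (sSup_le_sSup (by
    rintro _ ⟨a, ha, rfl⟩; exact hfX a ha)))

lemma IsCompactElt.widelyGenerated {x : L} (hx : IsCompactElt x) : WidelyGenerated x := by
  intro y hy
  obtain ⟨m, hym, hm⟩ := zorn_le_nonempty₀ {z | z < x} (fun c hc hchain b hb => by
    refine ⟨sSup c, lt_of_le_of_ne (sSup_le fun z hz => (hc hz).le) fun heq => ?_,
      fun z hz => le_sSup hz⟩
    obtain ⟨c', hc', hfin, hle⟩ := hx c heq.ge
    -- A maximal element `u` of the finite set `insert b c'` bounds `c'`, and `u < x`. Inserting `b`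
    -- makes the set nonempty.
    obtain ⟨u, hu⟩ := (hfin.insert b).exists_maximal (Set.insert_nonempty b c')
    have huc : u ∈ c := Set.insert_subset hb hc' hu.prop
    refine (hle.trans (sSup_le fun z hz => ?_)).not_gt (hc huc)
    exact (hchain.total (hc' hz) huc).elim id (hu.le_of_ge (Set.mem_insert_of_mem b hz))) y hy
  refine ⟨m, ⟨hm.prop, fun z hmz hzx => ?_⟩, hym⟩
  exact hmz.not_ge (hm.le_of_ge hzx hmz.le)

/-- Two distinct lower covers of a class minimum `x` are incongruent, as otherwise each would be
congruent to their join `x`. -/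
lemma FinitelyGeneratedElt.finite_covers {x : L} (hx : FinitelyGeneratedElt x) :
    {y : L | y ⋖ x}.Finite := by
  obtain ⟨r, hr, hmin⟩ := hx
  refine Set.Finite.of_finite_image (f := fun a => {y | r a y})
    (hr.2.subset (Set.image_subset_range _ _)) ?_
  intro a ha b hb hab
  by_contra hne
  have hrab : r a b := by
    have : b ∈ {y | r a y} := by
      rw [show {y | r a y} = {y | r b y} from hab]
      exact hr.1.1.refl b
    exact this
  have h1 := hr.1.sup (hr.1.1.refl a) hrab
  rw [sup_idem, WCovBy.sup_eq (CovBy.wcovBy ha) (CovBy.wcovBy hb) hne] at h1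
  exact (hmin a (hr.1.1.symm h1)).not_gt (CovBy.lt ha)

lemma FinitelyGeneratedElt.of_covers (hL : IsProfinite L) {x : L} (hx : WidelyGenerated x)
    (hfin : {y : L | y ⋖ x}.Finite) : FinitelyGeneratedElt x := by
  obtain ⟨r, hr, hri⟩ := exists_cofinite_forall_not_rel x hfin
    (fun y hy => hL x y (CovBy.lt hy).ne')
  refine ⟨r, hr, fun y hy => hr.1.le_of_rel (fun z hz hxz => ?_) hy⟩
  obtain ⟨x', hx', hzx'⟩ := hx z hz
  exact hri x' hx' (hr.1.convex hzx' hx'.le hxz)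

/-- The join of all elements strictly below a complete join-irreducible `j` is its unique lower
cover. Separating `j` from it makes `j` the minimum of its class. -/
lemma CompleteJoinIrred.finitelyGeneratedElt (hL : IsProfinite L) {j : L}
    (hj : CompleteJoinIrred j) : FinitelyGeneratedElt j := by
  obtain ⟨r, hr, hjr⟩ := hL j (sSup {y | y < j}) fun h => hj ⟨{y | y < j}, lt_irrefl j, h.symm⟩
  refine ⟨r, hr, fun y hy => hr.1.le_of_rel (fun z hz hjz => ?_) hy⟩
  exact hjr (hr.1.convex (le_sSup hz) (sSup_le fun _ h => le_of_lt h) hjz)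

lemma IsCompactElt.sSup_of_finite {S : Set L} (hS : S.Finite) (h : ∀ j ∈ S, IsCompactElt j) :
    IsCompactElt (sSup S) := by
  intro X hX
  choose! f hfX hfin hf using fun j hj => h j hj X ((le_sSup hj).trans hX)
  refine ⟨⋃ j ∈ S, f j, Set.iUnion₂_subset hfX, hS.biUnion hfin, sSup_le fun j hj => ?_⟩
  exact (hf j hj).trans (sSup_le_sSup (Set.subset_biUnion_of_mem hj))

lemma IsCofiniteCongruence.finite_minima {r : L → L → Prop} (hr : IsCofiniteCongruence r) :
    {z : L | ∀ y, r z y → z ≤ y}.Finite := by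
  refine Set.Finite.of_finite_image (f := fun a => {y | r a y})
    (hr.2.subset (Set.image_subset_range _ _)) ?_
  intro a ha b hb hab
  have hab' : {y | r a y} = {y | r b y} := hab
  have h1 : b ∈ {y | r a y} := hab' ▸ hr.1.1.refl b
  have h2 : a ∈ {y | r b y} := hab' ▸ hr.1.1.refl a
  exact le_antisymm (ha b h1) (hb a h2)

lemma FinitelyGeneratedElt.exists_sSup_eq {x : L} (hx : FinitelyGeneratedElt x) :
    ∃ S : Set L, S.Finite ∧ (∀ j ∈ S, CompleteJoinIrred j) ∧ sSup S = x := by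
  obtain ⟨r, hr, hmin⟩ := hx
  let F : Set L := {z : L | ∀ y, r z y → z ≤ y}
  have hF : F.Finite := hr.finite_minima
  have key : ∀ z ∈ F, z ≤ sSup {j | j ∈ F ∧ CompleteJoinIrred j ∧ j ≤ z} := by
    intro z hz
    refine (hF.wellFoundedOn (r := (· < ·))).induction
      (P := fun z => z ≤ sSup {j | j ∈ F ∧ CompleteJoinIrred j ∧ j ≤ z}) hz fun z hz ih => ?_
    by_cases hirr : CompleteJoinIrred z
    · exact le_sSup ⟨hz, hirr, le_rfl⟩
    · obtain ⟨X, hzX, hXz⟩ := not_not.1 hirr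
      have h1 := hr.1.sSup_image X (fun u => sInf {y | r u y})
        fun u _ => hr.1.rel_sInf_class u
      rw [hXz] at h1
      refine (hz _ h1).trans (sSup_le ?_)
      rintro _ ⟨u, hu, rfl⟩
      have hle : sInf {y | r u y} ≤ u := sInf_le (hr.1.1.refl u)
      have huz : u < z := lt_of_le_of_ne (hXz ▸ le_sSup hu) fun h => hzX (h ▸ hu)
      have hlt := hle.trans_lt huz
      refine (ih _ (fun y hy => sInf_le ?_) hlt).trans (sSup_le_sSup ?_)
      · exact hr.1.1.trans (hr.1.rel_sInf_class u) hy
      · exact fun j hj => ⟨hj.1, hj.2.1, hj.2.2.trans hlt.le⟩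
  exact ⟨{j | j ∈ F ∧ CompleteJoinIrred j ∧ j ≤ x}, hF.subset fun j hj => hj.1,
    fun j hj => hj.2.1, le_antisymm (sSup_le fun j hj => hj.2.2) (key x hmin)⟩

end

/-- In a profinite complete lattice, the following are equivalent for
an element `x`: (i) `x` is compact; (ii) `x` is finitely generated; (iii) `x` is widely
generated and covers only finitely many elements; (iv) `x` is the join of a finite set of
complete join-irreducibles. -/
theorem extended_weak_order_stmt12 {L : Type*} [CompleteLattice L]
    (hL : IsProfinite L) (x : L) :
    (IsCompactElt x ↔ FinitelyGeneratedElt x) ∧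
    (IsCompactElt x ↔ (WidelyGenerated x ∧ {y : L | y ⋖ x}.Finite)) ∧
    (IsCompactElt x ↔
      ∃ S : Set L, S.Finite ∧ (∀ j ∈ S, CompleteJoinIrred j) ∧ sSup S = x) := by
  have h12 : IsCompactElt x ↔ FinitelyGeneratedElt x :=
    ⟨.of_isCompactElt hL, FinitelyGeneratedElt.isCompactElt⟩
  refine ⟨h12, ⟨fun h => ⟨h.widelyGenerated, (h12.1 h).finite_covers⟩, fun h =>
    (FinitelyGeneratedElt.of_covers hL h.1 h.2).isCompactElt⟩,
    fun h => (h12.1 h).exists_sSup_eq, ?_⟩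
  rintro ⟨S, hS, hirr, rfl⟩
  exact .sSup_of_finite hS fun j hj => ((hirr j hj).finitelyGeneratedElt hL).isCompactElt
end

section
/- Every profinite complete lattice is algebraic: in a profinite complete lattice, every element is the join of a set of compact elements. -/
section Congruence

variable {L : Type*} [CompleteLattice L] {r : L → L → Prop}

theorem IsCompleteCongruence.sup_left (h : IsCompleteCongruence r) {a b : L} (hab : r a b) (c : L) :
    r (c ⊔ a) (c ⊔ b) := by
  have := (h.2 {(c, c), (a, b)} (by simp [hab, h.1.refl c])).1
  simpa [Set.image_pair] using this

theorem IsCompleteCongruence.inf_left (h : IsCompleteCongruence r) {a b : L} (hab : r a b) (c : L) :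
    r (c ⊓ a) (c ⊓ b) := by
  have := (h.2 {(c, c), (a, b)} (by simp [hab, h.1.refl c])).2
  simpa [Set.image_pair] using this

theorem IsCompleteCongruence.rel_sInf_class_s13 (h : IsCompleteCongruence r) (x : L) :
    r x (sInf {y | r x y}) := by
  have := (h.2 ((fun y => (x, y)) '' {y | r x y}) (by simp)).2
  have hne : {y | r x y}.Nonempty := ⟨x, h.1.refl x⟩
  simpa [Set.image_image, hne.image_const] using this

/-- Up to a cofinite congruence, every join is the join of a finite subfamily. -/
theorem IsCofiniteCongruence.exists_finite_rel_sSup (h : IsCofiniteCongruence r) (X : Set L) :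
    ∃ X' ⊆ X, X'.Finite ∧ r (sSup X) (sSup X') := by
  obtain ⟨X', hsub, hbij⟩ := Set.exists_subset_bijOn X (fun x : L => {y : L | r x y})
  refine ⟨X', hsub, ?_, ?_⟩
  · exact Set.Finite.of_finite_image (h.2.subset (Set.image_subset_range _ _)) hbij.injOn
  · let P : Set (L × L) := {p | p.1 ∈ X ∧ p.2 ∈ X' ∧ r p.1 p.2}
    have h1 : Prod.fst '' P = X := by
      ext a
      constructor
      · rintro ⟨p, hp, rfl⟩
        exact hp.1
      · intro ha
        obtain ⟨b, hb, hba⟩ := hbij.surjOn ⟨a, ha, rfl⟩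
        have hab : a ∈ {y | r b y} := by
          rw [show {y | r b y} = {y | r a y} from hba]
          exact h.1.1.refl a
        exact ⟨(a, b), ⟨ha, hb, h.1.1.symm hab⟩, rfl⟩
    have h2 : Prod.snd '' P = X' := by
      ext b
      constructor
      · rintro ⟨p, hp, rfl⟩
        exact hp.2.1
      · intro hb
        exact ⟨(b, b), ⟨hsub hb, hb, h.1.1.refl b⟩, rfl⟩
    have := (h.1.2 P fun p hp => hp.2.2).1
    rwa [h1, h2] at this

theorem FinitelyGeneratedElt.isCompactElt_s13 {m : L} (hm : FinitelyGeneratedElt m) :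
    IsCompactElt m := by
  obtain ⟨r, hr, hmin⟩ := hm
  intro X hX
  obtain ⟨X', hsub, hfin, hrel⟩ := hr.exists_finite_rel_sSup X
  refine ⟨X', hsub, hfin, ?_⟩
  have := hr.1.inf_left hrel m
  rw [inf_eq_left.2 hX] at this
  exact (hmin _ this).trans inf_le_right

end Congruence

/-- Every profinite complete lattice is algebraic: each element is the
join of a set of compact elements. -/
theorem extended_weak_order_stmt13 {L : Type*} [CompleteLattice L]
    (hL : IsProfinite L) (x : L) :
    ∃ S : Set L, (∀ y ∈ S, IsCompactElt y) ∧ sSup S = x := by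
  refine ⟨{m | FinitelyGeneratedElt m ∧ m ≤ x}, fun m hm => hm.1.isCompactElt_s13, ?_⟩
  set s := sSup {m | FinitelyGeneratedElt m ∧ m ≤ x} with hs
  have hsx : s ≤ x := sSup_le fun m hm => hm.2
  by_contra hne
  obtain ⟨r, hr, hnr⟩ := hL s x hne
  have hrel := hr.1.rel_sInf_class_s13 x
  have hms : sInf {y | r x y} ≤ s :=
    le_sSup ⟨⟨r, hr, fun y hy => sInf_le (hr.1.1.trans hrel hy)⟩, sInf_le (hr.1.1.refl x)⟩
  -- Joining `x ≡ ⋀ [x]` with `s` gives `x ≡ s`.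
  have := hr.1.sup_left hrel s
  rw [sup_eq_right.2 hsx, sup_eq_left.2 hms] at this
  exact hnr (hr.1.1.symm this)
end

section
/- Let L be a complete lattice and x ∈ L. Then x has a canonical join representation if and only if x is widely generated and, for each cover y ⋖ x, the set {z ∈ L : z ∨ y = x} has a minimum element j_y (i.e., an element of the set below all other elements of the set). In that case, the canonical join representation of x is x = ⋁_{y ⋖ x} j_y. -/
theorem CovBy.sup_eq_of_not_le {L : Type*} [CompleteLattice L] {x y z : L} (h : y ⋖ x)
    (hz : z ≤ x) (hzy : ¬ z ≤ y) : z ⊔ y = x :=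
  (h.eq_or_eq le_sup_right (sup_le hz h.le)).resolve_left fun e => hzy (sup_eq_right.mp e)

theorem CovBy.not_le_of_sup_eq {L : Type*} [CompleteLattice L] {x y z : L} (h : y ⋖ x)
    (hz : z ⊔ y = x) : ¬ z ≤ y :=
  fun e => h.lt.ne ((sup_eq_right.mpr e).symm.trans hz)

theorem exists_not_le_of_sSup_eq {L : Type*} [CompleteLattice L] {V : Set L} {x y : L}
    (hV : sSup V = x) (hy : y < x) : ∃ v ∈ V, ¬ v ≤ y := by
  by_contra! h
  exact hy.not_ge (hV ▸ sSup_le h)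

/-- Members of a canonical join representation of `x` come from lower covers `w` of `x`, and `w` is
moreover the largest element below `x` that is not above `u`. -/
theorem IsCanonicalJoinRep.exists_covBy {L : Type*} [CompleteLattice L] {U : Set L} {x u : L}
    (hU : IsCanonicalJoinRep U x) (hu : u ∈ U) :
    ∃ w : L, w ⋖ x ∧ (∀ z ≤ x, ¬ u ≤ z → z ≤ w) ∧ IsLeast {z : L | z ⊔ w = x} u := by
  obtain ⟨hsup, hirr, hcan⟩ := hU
  set w := sSup {z : L | z ≤ x ∧ ¬ u ≤ z} with hw
  have hwx : w ≤ x := sSup_le fun z hz => hz.1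
  have hmax : ∀ z ≤ x, ¬ u ≤ z → z ≤ w := fun z h1 h2 => le_sSup ⟨h1, h2⟩
  have hne : w ≠ x := fun h => by
    obtain ⟨v, hv, huv⟩ := hcan _ h u hu
    exact hv.2 huv
  have hUx : ∀ a ∈ U, a ≤ x := fun a ha => hsup ▸ le_sSup ha
  have hle : ∀ a ∈ U, a ≠ u → a ≤ w := by
    intro a ha hau
    refine hmax a (hUx a ha) fun hua => ?_
    -- If `u ≤ a` with `a ≠ u` in `U`, then `u` can be dropped from `U`.
    refine hirr (U \ {u}) ⟨Set.sdiff_subset, fun h => (h hu).2 rfl⟩ (le_antisymm ?_ ?_)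
    · exact sSup_le fun b hb => hUx b hb.1
    · rw [← hsup]
      refine sSup_le fun b hb => ?_
      by_cases hbu : b = u
      · rw [hbu]
        have h1 : a ∈ U \ {u} := ⟨ha, hau⟩
        exact hua.trans (le_sSup h1)
      · exact le_sSup ⟨hb, hbu⟩
  have hxle : ∀ z, w ≤ z → u ≤ z → x ≤ z := by
    intro z hwz huz
    rw [← hsup]
    refine sSup_le fun b hb => ?_
    by_cases hbu : b = u
    · exact hbu ▸ huz
    · exact (hle b hb hbu).trans hwz
  have hcov : w ⋖ x := by
    refine ⟨lt_of_le_of_ne hwx hne, fun z hwz hzx => ?_⟩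
    by_cases huz : u ≤ z
    · exact hzx.not_ge (hxle z hwz.le huz)
    · exact hwz.not_ge (hmax z hzx.le huz)
  have huw : ¬ u ≤ w := fun h => hcov.lt.not_ge (hxle w le_rfl h)
  refine ⟨w, hcov, hmax, hcov.sup_eq_of_not_le (hUx u hu) huw, fun z hz => ?_⟩
  obtain ⟨v, hv, huv⟩ := hcan {z, w} (by rw [sSup_pair]; exact hz) u hu
  rcases hv with rfl | rfl
  · exact huv
  · exact absurd huv huw

/-- The least elements `j_y` form an antichain: for distinct lower covers, `y ⊔ y' = x` forces
`j_{y'} ≤ y`, so `j_y ≤ j_{y'}` would put `j_y` below `y`. -/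
theorem eq_of_isLeast_of_le {L : Type*} [CompleteLattice L] {x y y' j j' : L}
    (hy : y ⋖ x) (hy' : y' ⋖ x) (hj : IsLeast {z : L | z ⊔ y = x} j)
    (hj' : IsLeast {z : L | z ⊔ y' = x} j') (h : j ≤ j') : j = j' := by
  by_cases e : y = y'
  · subst e
    exact hj.unique hj'
  · have hyy' : ¬ y ≤ y' := fun hle =>
      (hy.eq_or_eq hle hy'.le).elim (fun h => e h.symm) hy'.lt.ne
    have h1 : j' ≤ y := hj'.2 (hy'.sup_eq_of_not_le hy.le hyy')
    exact absurd (h.trans h1) (hy.not_le_of_sup_eq hj.1)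

theorem isCanonicalJoinRep_of_widelyGenerated {L : Type*} [CompleteLattice L] {x : L}
    (hwg : WidelyGenerated x)
    (hmin : ∀ y : L, y ⋖ x → ∃ j : L, IsLeast {z : L | z ⊔ y = x} j) :
    IsCanonicalJoinRep {j : L | ∃ y : L, y ⋖ x ∧ IsLeast {z : L | z ⊔ y = x} j} x := by
  have hcan : ∀ V : Set L, sSup V = x →
      ∀ u ∈ {j : L | ∃ y : L, y ⋖ x ∧ IsLeast {z : L | z ⊔ y = x} j}, ∃ v ∈ V, u ≤ v := by
    rintro V hV j ⟨y, hy, hj⟩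
    obtain ⟨v, hv, hvy⟩ := exists_not_le_of_sSup_eq hV hy.lt
    exact ⟨v, hv, hj.2 (hy.sup_eq_of_not_le (hV ▸ le_sSup hv) hvy)⟩
  refine ⟨?_, ?_, hcan⟩
  · have hle : sSup {j : L | ∃ y : L, y ⋖ x ∧ IsLeast {z : L | z ⊔ y = x} j} ≤ x := by
      refine sSup_le ?_
      rintro j ⟨y, -, hj⟩
      exact le_sup_left.trans_eq hj.1
    by_contra hne
    obtain ⟨y, hy, hley⟩ := hwg _ (lt_of_le_of_ne hle hne)
    obtain ⟨j, hj⟩ := hmin y hy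
    have hmem : j ∈ {j : L | ∃ y : L, y ⋖ x ∧ IsLeast {z : L | z ⊔ y = x} j} := ⟨y, hy, hj⟩
    exact hy.not_le_of_sup_eq hj.1 ((le_sSup hmem).trans hley)
  · intro U' hU' hsup
    refine hU'.2 fun j hjU => ?_
    obtain ⟨j', hj'U, hjj'⟩ := hcan U' hsup j hjU
    obtain ⟨y, hy, hj⟩ := hjU
    obtain ⟨y', hy', hj'⟩ := hU'.1 hj'U
    rwa [eq_of_isLeast_of_le hy hy' hj hj' hjj']

/-- In a complete lattice, `x` has a canonical join representation if
and only if `x` is widely generated and, for each cover `y ⋖ x`, the set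
`{z : z ∨ y = x}` has a minimum element `j_y`. In that case the canonical join
representation is `x = ⋁_{y ⋖ x} j_y`. -/
theorem extended_weak_order_stmt17 {L : Type*} [CompleteLattice L] (x : L) :
    ((∃ U : Set L, IsCanonicalJoinRep U x) ↔
      (WidelyGenerated x ∧
        ∀ y : L, y ⋖ x → ∃ j : L, IsLeast {z : L | z ⊔ y = x} j)) ∧
    ((WidelyGenerated x ∧
        ∀ y : L, y ⋖ x → ∃ j : L, IsLeast {z : L | z ⊔ y = x} j) →
      IsCanonicalJoinRep
        {j : L | ∃ y : L, y ⋖ x ∧ IsLeast {z : L | z ⊔ y = x} j} x) := by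
  refine ⟨⟨?_, fun h => ⟨_, isCanonicalJoinRep_of_widelyGenerated h.1 h.2⟩⟩,
    fun h => isCanonicalJoinRep_of_widelyGenerated h.1 h.2⟩
  rintro ⟨U, hU⟩
  have key : ∀ y < x, ∃ u w : L, w ⋖ x ∧ y ≤ w ∧ IsLeast {z : L | z ⊔ w = x} u := by
    intro y hy
    obtain ⟨u, hu, huy⟩ := exists_not_le_of_sSup_eq hU.1 hy
    obtain ⟨w, hw, hmax, hleast⟩ := hU.exists_covBy hu
    exact ⟨u, w, hw, hmax y hy.le huy, hleast⟩
  refine ⟨fun y hy => ?_, fun y hy => ?_⟩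
  · obtain ⟨u, w, hw, hyw, -⟩ := key y hy
    exact ⟨w, hw, hyw⟩
  · obtain ⟨u, w, hw, hyw, hleast⟩ := key y hy.lt
    obtain rfl : w = y := (hy.eq_or_eq hyw hw.le).resolve_right hw.lt.ne
    exact ⟨u, hleast⟩
end
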